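/- Let φ and ψ be automorphisms of the unit disk D, neither the identity, and suppose the commutator [C_ψ*, C_φ] is compact on H^2(D). Then for every ω ∈ ∂D, setting ζ_1 = φ^{-1}(ω) and ζ_2 = ψ^{-1}(ω), one has φ^{-1}(ζ_2) = ψ^{-1}(ζ_1) (hence φ∘ψ = ψ∘φ) and |(ψ^{-1})'(ζ_1)| · |ψ'(ζ_2)| = 1. -/

import Mathlib

/-! For automorphisms `φ, ψ` and `T = [C_ψ*, C_φ]`, the reproducing property gives, for `p ∈ D`,
`⟪K_{ψ p}, T K_{φ p}⟫ = ⟪C_ψ K_{ψ p}, C_φ K_{φ p}⟫ - 1 / (1 - φ (ψ p) * conj (ψ (φ p)))`.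
Multiply by `1 - |p|²` and let `p → ζ` on the circle. The normalized kernels tend weakly to zero,
so the left side tends to `0` when `T` is compact. As `C_φ K_{φ p}` is an explicit combination of
`K_p` and `K_0`, the first term on the right tends to `1 / (|φ' ζ| |ψ' ζ|)`, which is not zero. So
the last term has a nonzero limit, which forces `φ (ψ ζ) = ψ (φ ζ)`. Hence `φ` and `ψ` commute on
the disk, and the identity `1 - |φ p|² = |φ' p| (1 - |p|²)` turns that limit into
`1 / (|ψ' (φ ζ)| |φ' ζ|)`; comparing the two values gives the relation between the derivatives.
-/

open Filter MeasureTheory Metric Set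
open scoped ComplexInnerProductSpace Topology

noncomputable section

/-- The open unit disk `D` in `ℂ`. -/
abbrev Disk : Set ℂ := Metric.ball 0 1

/-- An abstract presentation of a reproducing-kernel Hilbert space of holomorphic functions
on the unit disk `D` with reproducing kernel `K_w(z) = (1 - z·conj w)^{-t}`.  For `t = 1`
this is the Hardy space `H²(D)`; for `t = s + 2` (`s > -1`) it is the weighted Bergman space
`A²_s(D)`.  Injectivity of evaluation forces the kernels to be total, so such a structure
determines the space uniquely up to canonical unitary equivalence. -/
structure DiskKernelSpace (t : ℝ) where
  (H : Type)
  [grp : NormedAddCommGroup H]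
  [ips : InnerProductSpace ℂ H]
  [cpl : CompleteSpace H]
  eval : H → ℂ → ℂ
  eval_add : ∀ f g : H, ∀ z, eval (f + g) z = eval f z + eval g z
  eval_smul : ∀ (c : ℂ) (f : H) (z : ℂ), eval (c • f) z = c * eval f z
  holo : ∀ f : H, DifferentiableOn ℂ (eval f) Disk
  eval_injective : ∀ f g : H, (∀ z ∈ Disk, eval f z = eval g z) → f = g
  kernel : ℂ → H
  eval_kernel : ∀ w ∈ Disk, ∀ z ∈ Disk,
    eval (kernel w) z = (1 - z * (starRingEnd ℂ) w) ^ (-(t : ℂ))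
  reproducing : ∀ (f : H), ∀ w ∈ Disk, ⟪kernel w, f⟫ = eval f w

attribute [instance] DiskKernelSpace.grp DiskKernelSpace.ips DiskKernelSpace.cpl

/-- `T` is the composition operator `C_φ : f ↦ f ∘ φ` on `S`. -/
def DiskKernelSpace.IsCompositionOperator {t : ℝ} (S : DiskKernelSpace t)
    (φ : ℂ → ℂ) (T : S.H →L[ℂ] S.H) : Prop :=
  ∀ f : S.H, ∀ z ∈ Disk, S.eval (T f) z = S.eval f (φ z)

open scoped ComplexConjugate

section WeakConvergence

variable {𝕜 E F ι : Type*} [RCLike 𝕜] [NormedAddCommGroup E] [InnerProductSpace 𝕜 E]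
  [NormedAddCommGroup F] [InnerProductSpace 𝕜 F] {l : Filter ι} {x : ι → E} {C : ℝ}

theorem tendsto_inner_zero_of_dense_span {s : Set E} (hs : Dense (Submodule.span 𝕜 s : Set E))
    (hx : ∀ i, ‖x i‖ ≤ C) (h : ∀ y ∈ s, Tendsto (fun i => inner 𝕜 y (x i)) l (𝓝 0)) (y : E) :
    Tendsto (fun i => inner 𝕜 y (x i)) l (𝓝 0) := by
  have hlip : ∀ i, LipschitzWith C.toNNReal fun y => inner 𝕜 y (x i) := fun i =>
    LipschitzWith.of_dist_le_mul fun y z => by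
      rw [dist_eq_norm, ← inner_sub_left, dist_eq_norm, mul_comm]
      refine (norm_inner_le_norm _ _).trans ?_
      gcongr
      exact (hx i).trans (Real.le_coe_toNNReal C)
  have hclosed : IsClosed {y | Tendsto (fun i => inner 𝕜 y (x i)) l (𝓝 0)} :=
    (LipschitzWith.uniformEquicontinuous _ _ hlip).equicontinuous.isClosed_setOfPred_tendsto
      continuous_const
  refine hclosed.closure_subset_iff.mpr (fun z hz => ?_) (hs y)
  induction hz using Submodule.span_induction with
  | mem z hz => exact h z hz
  | zero => simpa using tendsto_const_nhds
  | add z w _ _ hz hw => simpa [inner_add_left] using hz.add hw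
  | smul c z _ hz => simpa [inner_smul_left] using hz.const_mul (conj c)

theorem tendsto_zero_of_isCompactOperator [CompleteSpace E] [CompleteSpace F] {T : E →L[𝕜] F}
    (hT : IsCompactOperator T) (hx : ∀ i, ‖x i‖ ≤ C)
    (hweak : ∀ y, Tendsto (fun i => inner 𝕜 y (x i)) l (𝓝 0)) :
    Tendsto (fun i => T (x i)) l (𝓝 0) := by
  obtain ⟨K, hK, hTK⟩ := hT.image_closedBall_subset_compact (f := T.toLinearMap) C
  refine hK.tendsto_nhds_of_unique_mapClusterPt
    (Eventually.of_forall fun i => hTK ⟨x i, by simpa using hx i, rfl⟩) fun y _ hy => ?_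
  obtain ⟨U, hUl, hU⟩ := mapClusterPt_iff_ultrafilter.mp hy
  have hself : Tendsto (fun i => inner 𝕜 y (T (x i))) U (𝓝 (inner 𝕜 y y)) :=
    tendsto_const_nhds.inner hU
  have hzero : Tendsto (fun i => inner 𝕜 y (T (x i))) U (𝓝 0) := by
    simpa only [ContinuousLinearMap.adjoint_inner_left] using (hweak (T.adjoint y)).mono_left hUl
  exact inner_self_eq_zero.mp (tendsto_nhds_unique hself hzero)

end WeakConvergence

section ReproducingKernel

variable {t : ℝ} {u v w : ℂ}

theorem one_sub_mul_conj_ne_zero (hu : ‖u‖ ≤ 1) (hv : ‖v‖ < 1) : 1 - u * conj v ≠ 0 := by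
  refine sub_ne_zero.mpr fun h => ?_
  have hnorm : 1 = ‖u‖ * ‖v‖ := by simpa using congrArg norm h
  nlinarith [norm_nonneg u, norm_nonneg v]

theorem one_sub_mul_conj_eq_zero_iff (hv : ‖v‖ = 1) : 1 - u * conj v = 0 ↔ u = v := by
  have hv0 : v ≠ 0 := norm_ne_zero_iff.mp (hv ▸ one_ne_zero)
  rw [← RCLike.inv_eq_conj hv, ← div_eq_mul_inv, sub_eq_zero, eq_comm, div_eq_one_iff_eq hv0]

theorem one_sub_mul_conj_self (z : ℂ) : 1 - z * conj z = ((1 - ‖z‖ ^ 2 : ℝ) : ℂ) := by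
  rw [Complex.mul_conj']
  push_cast
  rfl

theorem one_sub_norm_sq_pos {z : ℂ} (hz : ‖z‖ < 1) : 0 < 1 - ‖z‖ ^ 2 := by
  nlinarith [norm_nonneg z]

theorem tendsto_one_sub_norm_sq (hw : ‖w‖ = 1) :
    Tendsto (fun z : ℂ => 1 - ‖z‖ ^ 2) (𝓝[Disk] w) (𝓝[>] 0) := by
  refine tendsto_nhdsWithin_iff.mpr ⟨?_, ?_⟩
  · have hcont : Continuous fun z : ℂ => 1 - ‖z‖ ^ 2 := by fun_prop
    simpa [hw] using (hcont.tendsto w).mono_left nhdsWithin_le_nhds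
  · filter_upwards [self_mem_nhdsWithin] with z hz
    exact one_sub_norm_sq_pos (by simpa using hz)

namespace DiskKernelSpace

variable (S : DiskKernelSpace t)

theorem inner_kernel_kernel (hv : v ∈ Disk) (hw : w ∈ Disk) :
    ⟪S.kernel v, S.kernel w⟫ = (1 - v * conj w) ^ (-(t : ℂ)) := by
  rw [S.reproducing _ v hv, S.eval_kernel w hw v hv]

theorem ext_inner_kernel {f g : S.H} (h : ∀ w ∈ Disk, ⟪S.kernel w, f⟫ = ⟪S.kernel w, g⟫) :
    f = g :=
  S.eval_injective f g fun w hw => by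
    rw [← S.reproducing f w hw, ← S.reproducing g w hw, h w hw]

theorem dense_span_kernel : Dense (Submodule.span ℂ (S.kernel '' Disk) : Set S.H) := by
  rw [Submodule.dense_iff_topologicalClosure_eq_top, Submodule.topologicalClosure_eq_top_iff,
    Submodule.eq_bot_iff]
  refine fun f hf => S.ext_inner_kernel fun w hw => ?_
  rw [inner_zero_right]
  exact hf _ (Submodule.subset_span (mem_image_of_mem _ hw))

theorem norm_kernel_sq (hw : w ∈ Disk) : ‖S.kernel w‖ ^ 2 = (1 - ‖w‖ ^ 2) ^ (-t) := by
  have hw' : 0 < 1 - ‖w‖ ^ 2 := one_sub_norm_sq_pos (by simpa using hw)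
  rw [← Complex.ofReal_inj, Complex.ofReal_cpow hw'.le, ← one_sub_mul_conj_self,
    Complex.ofReal_neg, ← S.inner_kernel_kernel hw hw, inner_self_eq_norm_sq_to_K,
    Complex.ofReal_pow]
  rfl

theorem tendsto_norm_kernel_atTop (ht : 0 < t) (hw : ‖w‖ = 1) :
    Tendsto (fun z => ‖S.kernel z‖) (𝓝[Disk] w) atTop := by
  have hsq : Tendsto (fun z => ‖S.kernel z‖ ^ 2) (𝓝[Disk] w) atTop := by
    refine ((tendsto_rpow_neg_nhdsGT_zero (neg_neg_of_pos ht)).comp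
      (tendsto_one_sub_norm_sq hw)).congr' ?_
    filter_upwards [self_mem_nhdsWithin] with z hz using (S.norm_kernel_sq hz).symm
  simpa only [Function.comp_def, Real.sqrt_sq (norm_nonneg _)] using
    Real.tendsto_sqrt_atTop.comp hsq

/-- The unit vector `K_w / ‖K_w‖` in the direction of the reproducing kernel at `w`, which tends
weakly to zero at the unit circle; it is `0` when `K_w = 0`, which is only possible off `D`. -/
def normalizedKernel (w : ℂ) : S.H := (‖S.kernel w‖ : ℂ)⁻¹ • S.kernel w

theorem norm_normalizedKernel_le (w : ℂ) : ‖S.normalizedKernel w‖ ≤ 1 := by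
  simpa [normalizedKernel, norm_smul] using inv_mul_le_one

theorem norm_smul_normalizedKernel (w : ℂ) :
    (‖S.kernel w‖ : ℂ) • S.normalizedKernel w = S.kernel w := by
  by_cases h : S.kernel w = 0
  · simp [h]
  · exact smul_inv_smul₀ (by simpa using h) _

theorem tendsto_inner_normalizedKernel (ht : 0 < t) (hw : ‖w‖ = 1) (f : S.H) :
    Tendsto (fun z => ⟪f, S.normalizedKernel z⟫) (𝓝[Disk] w) (𝓝 0) := by
  refine tendsto_inner_zero_of_dense_span S.dense_span_kernel S.norm_normalizedKernel_le ?_ f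
  rintro _ ⟨u, hu, rfl⟩
  have hslit : 1 - u * conj w ∈ Complex.slitPlane := by
    rw [sub_eq_add_neg]
    exact Complex.mem_slitPlane_of_norm_lt_one (by simpa [hw] using hu)
  have hkernel : ContinuousAt (fun z => (1 - u * conj z) ^ (-(t : ℂ))) w :=
    ContinuousAt.comp (f := fun z => 1 - u * conj z) (continuousAt_cpow_const hslit) (by fun_prop)
  have hinv : Tendsto (fun z => (‖S.kernel z‖ : ℂ)⁻¹) (𝓝[Disk] w) (𝓝 0) := by
    simpa [Function.comp_def] using (Complex.continuous_ofReal.tendsto 0).comp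
      (tendsto_inv_atTop_zero.comp (S.tendsto_norm_kernel_atTop ht hw))
  have hprod := hinv.mul (hkernel.tendsto.mono_left nhdsWithin_le_nhds)
  rw [zero_mul] at hprod
  refine hprod.congr' ?_
  filter_upwards [self_mem_nhdsWithin] with z hz
  rw [normalizedKernel, inner_smul_right, S.inner_kernel_kernel hu hz]

theorem tendsto_compact_normalizedKernel (ht : 0 < t) {T : S.H →L[ℂ] S.H}
    (hT : IsCompactOperator T) (hw : ‖w‖ = 1) :
    Tendsto (fun z => T (S.normalizedKernel z)) (𝓝[Disk] w) (𝓝 0) :=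
  tendsto_zero_of_isCompactOperator hT S.norm_normalizedKernel_le
    (S.tendsto_inner_normalizedKernel ht hw)

variable {S} {φ ψ : ℂ → ℂ} {Cφ Cψ : S.H →L[ℂ] S.H}

theorem IsCompositionOperator.adjoint_kernel (hφ : S.IsCompositionOperator φ Cφ)
    (hw : w ∈ Disk) (hφw : φ w ∈ Disk) : Cφ.adjoint (S.kernel w) = S.kernel (φ w) :=
  ext_inner_right ℂ fun f => by
    rw [ContinuousLinearMap.adjoint_inner_left, S.reproducing _ w hw, hφ f w hw,
      S.reproducing f _ hφw]

theorem inner_kernel_commutator_kernel (hCφ : S.IsCompositionOperator φ Cφ)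
    (hCψ : S.IsCompositionOperator ψ Cψ) (hv : v ∈ Disk) (hφv : φ v ∈ Disk) (hw : w ∈ Disk)
    (hψw : ψ w ∈ Disk) :
    ⟪S.kernel v, ⁅Cψ.adjoint, Cφ⁆ (S.kernel w)⟫ =
      ⟪Cψ (S.kernel v), Cφ (S.kernel w)⟫ - ⟪S.kernel (φ v), S.kernel (ψ w)⟫ := by
  rw [Ring.lie_def, sub_apply, inner_sub_right, mul_apply_eq_comp,
    mul_apply_eq_comp, ContinuousLinearMap.adjoint_inner_right,
    hCψ.adjoint_kernel hw hψw, ← ContinuousLinearMap.adjoint_inner_left Cφ _ (S.kernel v),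
    hCφ.adjoint_kernel hv hφv]

end DiskKernelSpace

end ReproducingKernel

section DiskAutomorphism

/-- `φ z = (a * z + b) / (c * z + d)` is an automorphism of the unit disk, presented by a choice of
coefficients. Invertibility is encoded by `φ` mapping the disk into the disk but the circle into the
circle: such a linear fractional map is not constant. -/
structure IsDiskAutomorphism (φ : ℂ → ℂ) (a b c d : ℂ) : Prop where
  apply_eq : ∀ z, φ z = (a * z + b) / (c * z + d)
  denom_ne_zero : ∀ z ∈ closedBall (0 : ℂ) 1, c * z + d ≠ 0
  mapsTo_disk : MapsTo φ Disk Disk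
  mapsTo_sphere : MapsTo φ (sphere 0 1) (sphere 0 1)

theorem eq_zero_of_trigPolynomial_eq_zero {p q r : ℂ}
    (h : ∀ z ∈ sphere (0 : ℂ) 1, p + q * z + r * conj z = 0) : p = 0 ∧ q = 0 ∧ r = 0 := by
  have h_one := h 1 (by simp)
  have h_neg_one := h (-1) (by simp)
  have h_I := h Complex.I (by simp)
  simp only [map_one, map_neg, Complex.conj_I] at h_one h_neg_one h_I
  have hp : p = 0 := by linear_combination (h_one + h_neg_one) / 2
  have hq : q = 0 := by
    linear_combination h_one / 2 - Complex.I / 2 * h_I + (Complex.I - 1) / 2 * hp +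
      (q - r) / 2 * Complex.I_sq
  exact ⟨hp, hq, by linear_combination h_one - hp - hq⟩

theorem hasDerivAt_linearFractional (a b : ℂ) {c d z : ℂ} (hz : c * z + d ≠ 0) :
    HasDerivAt (fun z => (a * z + b) / (c * z + d)) ((a * d - b * c) / (c * z + d) ^ 2) z := by
  have hnum : HasDerivAt (fun z => a * z + b) a z := by
    simpa using ((hasDerivAt_id z).const_mul a).add_const b
  have hdenom : HasDerivAt (fun z => c * z + d) c z := by
    simpa using ((hasDerivAt_id z).const_mul c).add_const d
  refine (hnum.fun_div hdenom hz).congr_deriv ?_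
  congr 1
  ring

theorem deriv_mul_deriv_eq_one_of_leftInvOn {f g : ℂ → ℂ} {s : Set ℂ} {z : ℂ}
    (hs : UniqueDiffWithinAt ℂ s z) (hz : z ∈ s) (hgf : LeftInvOn g f s)
    (hg : DifferentiableAt ℂ g (f z)) (hf : DifferentiableAt ℂ f z) :
    deriv g (f z) * deriv f z = 1 := by
  have hcomp := (hg.hasDerivAt.comp z hf.hasDerivAt).hasDerivWithinAt (s := s)
  exact hs.eq_deriv s hcomp ((hasDerivWithinAt_id z s).congr hgf (hgf hz))

namespace IsDiskAutomorphism

variable {φ ψ : ℂ → ℂ} {a b c d a₂ b₂ c₂ d₂ z w : ℂ}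

theorem coeff_relations (hφ : IsDiskAutomorphism φ a b c d) :
    c * conj c + d * conj d = a * conj a + b * conj b ∧ c * conj d = a * conj b := by
  obtain ⟨h₀, h₁, -⟩ := eq_zero_of_trigPolynomial_eq_zero
    (p := c * conj c + d * conj d - a * conj a - b * conj b) (q := c * conj d - a * conj b)
    (r := d * conj c - b * conj a) fun z hz => by
      have hz' : ‖z‖ = 1 := by simpa using hz
      have hφz := mem_sphere_zero_iff_norm.mp (hφ.mapsTo_sphere hz)
      rw [hφ.apply_eq, norm_div, div_eq_one_iff_eq
        (norm_ne_zero_iff.mpr (hφ.denom_ne_zero z (sphere_subset_closedBall hz)))] at hφz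
      have hzz : z * conj z = 1 := by simp [Complex.mul_conj', hz']
      have hmod : (a * z + b) * conj (a * z + b) = (c * z + d) * conj (c * z + d) := by
        rw [Complex.mul_conj', Complex.mul_conj', hφz]
      simp only [map_add, map_mul] at hmod
      linear_combination (a * conj a - c * conj c) * hzz - hmod
  exact ⟨by linear_combination h₀, by linear_combination h₁⟩

theorem norm_det_eq (hφ : IsDiskAutomorphism φ a b c d) :
    ‖a * d - b * c‖ = ‖d‖ ^ 2 - ‖b‖ ^ 2 := by
  obtain ⟨hsum, hcross⟩ := hφ.coeff_relations
  have hbd : ‖b‖ ≤ ‖d‖ := by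
    have h0 := mem_ball_zero_iff.mp (hφ.mapsTo_disk (mem_ball_self one_pos))
    have hd := hφ.denom_ne_zero 0 (mem_closedBall_self zero_le_one)
    simp only [mul_zero, zero_add] at hd
    rw [hφ.apply_eq, norm_div] at h0
    simp only [mul_zero, zero_add] at h0
    exact ((div_lt_one (norm_pos_iff.mpr hd)).mp h0).le
  refine (sq_eq_sq₀ (norm_nonneg _) (sub_nonneg.mpr (by gcongr))).mp ?_
  rw [← Complex.ofReal_inj]
  push_cast
  simp only [← Complex.mul_conj', map_sub, map_mul]
  linear_combination (conj c * d - conj a * b) * hcross - (d * conj d - b * conj b) * hsum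

theorem one_sub_map_mul_conj_map (hφ : IsDiskAutomorphism φ a b c d) (hz : c * z + d ≠ 0)
    (hw : c * w + d ≠ 0) :
    1 - φ z * conj (φ w) =
      ‖a * d - b * c‖ * (1 - z * conj w) / ((c * z + d) * conj (c * w + d)) := by
  obtain ⟨hsum, hcross⟩ := hφ.coeff_relations
  have hcross' : conj c * d = conj a * b := by simpa using congrArg conj hcross
  have hw' : conj (c * w + d) ≠ 0 := (map_ne_zero _).mpr hw
  rw [hφ.apply_eq, hφ.apply_eq, map_div₀, div_mul_div_comm, eq_div_iff (mul_ne_zero hz hw'),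
    sub_mul, div_mul_cancel₀ _ (mul_ne_zero hz hw'), hφ.norm_det_eq]
  push_cast
  simp only [← Complex.mul_conj', map_add, map_mul]
  linear_combination z * conj w * hsum + z * hcross + conj w * hcross'

theorem differentiableAt (hφ : IsDiskAutomorphism φ a b c d) (hz : c * z + d ≠ 0) :
    DifferentiableAt ℂ φ z :=
  funext hφ.apply_eq ▸ (hasDerivAt_linearFractional a b hz).differentiableAt

theorem norm_deriv (hφ : IsDiskAutomorphism φ a b c d) (hz : c * z + d ≠ 0) :
    ‖deriv φ z‖ = ‖a * d - b * c‖ / ‖c * z + d‖ ^ 2 := by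
  rw [funext hφ.apply_eq, (hasDerivAt_linearFractional a b hz).deriv, norm_div, norm_pow]

theorem one_sub_norm_map_sq (hφ : IsDiskAutomorphism φ a b c d) (hz : c * z + d ≠ 0) :
    1 - ‖φ z‖ ^ 2 = ‖deriv φ z‖ * (1 - ‖z‖ ^ 2) := by
  rw [← Complex.ofReal_inj, ← one_sub_mul_conj_self, hφ.one_sub_map_mul_conj_map hz hz,
    one_sub_mul_conj_self, Complex.mul_conj', hφ.norm_deriv hz]
  push_cast
  ring

theorem norm_deriv_pos (hφ : IsDiskAutomorphism φ a b c d) (hz : c * z + d ≠ 0) :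
    0 < ‖deriv φ z‖ := by
  have h0 : (0 : ℂ) ∈ Disk := mem_ball_self one_pos
  have hdenom0 := hφ.denom_ne_zero 0 (ball_subset_closedBall h0)
  have hpos := one_sub_norm_sq_pos (mem_ball_zero_iff.mp (hφ.mapsTo_disk h0))
  rw [hφ.one_sub_norm_map_sq hdenom0, norm_zero, zero_pow two_ne_zero, sub_zero, mul_one,
    hφ.norm_deriv hdenom0, div_pos_iff_of_pos_right (by positivity)] at hpos
  rw [hφ.norm_deriv hz]
  positivity

theorem continuousAt_norm_deriv (hφ : IsDiskAutomorphism φ a b c d) (hz : c * z + d ≠ 0) :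
    ContinuousAt (fun w => ‖deriv φ w‖) z := by
  have hanalytic : AnalyticAt ℂ φ z := by
    rw [funext hφ.apply_eq]
    fun_prop (disch := assumption)
  exact hanalytic.deriv.continuousAt.norm

theorem norm_eq_one_of_norm_map_eq_one (hφ : IsDiskAutomorphism φ a b c d) (hz : ‖φ z‖ = 1) :
    ‖z‖ = 1 := by
  -- At the pole, `φ z` takes the junk value `0`, which is not on the circle.
  have hdenom : c * z + d ≠ 0 := fun h => by simp [hφ.apply_eq, h] at hz
  have h : ‖deriv φ z‖ * (1 - ‖z‖ ^ 2) = 0 := by simp [← hφ.one_sub_norm_map_sq hdenom, hz]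
  have hsq := (mul_eq_zero_iff_left (hφ.norm_deriv_pos hdenom).ne').mp h
  exact (pow_eq_one_iff_of_nonneg (norm_nonneg z) two_ne_zero).mp (sub_eq_zero.mp hsq).symm

theorem surjOn_sphere_of_rightInvOn {g : ℂ → ℂ} (hφ : IsDiskAutomorphism φ a b c d)
    (hg : RightInvOn g φ (sphere 0 1)) : SurjOn φ (sphere 0 1) (sphere 0 1) := fun w hw =>
  ⟨g w, mem_sphere_zero_iff_norm.mpr (hφ.norm_eq_one_of_norm_map_eq_one
    ((hg hw).symm ▸ mem_sphere_zero_iff_norm.mp hw)), hg hw⟩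

theorem deriv_leftInv_mul_deriv {g : ℂ → ℂ} (hφ : IsDiskAutomorphism φ a b c d)
    (hg : LeftInvOn g φ (closedBall 0 1)) (hz : z ∈ closedBall (0 : ℂ) 1)
    (hgz : DifferentiableAt ℂ g (φ z)) : deriv g (φ z) * deriv φ z = 1 :=
  deriv_mul_deriv_eq_one_of_leftInvOn
    (uniqueDiffWithinAt_convex_of_isRCLikeNormedField (convex_closedBall 0 1)
      (by simp [interior_closedBall (0 : ℂ) one_ne_zero]) (subset_closure hz))
    hz hg hgz (hφ.differentiableAt (hφ.denom_ne_zero z hz))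

theorem mapsTo_closedBall (hφ : IsDiskAutomorphism φ a b c d) :
    MapsTo φ (closedBall 0 1) (closedBall 0 1) := by
  rw [← ball_union_sphere]
  exact hφ.mapsTo_disk.union_union hφ.mapsTo_sphere

theorem tendsto_nhdsWithin_disk (hφ : IsDiskAutomorphism φ a b c d) (hz : c * z + d ≠ 0) :
    Tendsto φ (𝓝[Disk] z) (𝓝[Disk] (φ z)) :=
  (hφ.differentiableAt hz).continuousAt.continuousWithinAt.tendsto_nhdsWithin hφ.mapsTo_disk

theorem differentiableAt_comp (hφ : IsDiskAutomorphism φ a b c d)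
    (hψ : IsDiskAutomorphism ψ a₂ b₂ c₂ d₂) (hz : z ∈ closedBall (0 : ℂ) 1) :
    DifferentiableAt ℂ (φ ∘ ψ) z :=
  (hφ.differentiableAt (hφ.denom_ne_zero _ (hψ.mapsTo_closedBall hz))).comp z
    (hψ.differentiableAt (hψ.denom_ne_zero z hz))

theorem diffContOnCl_comp (hφ : IsDiskAutomorphism φ a b c d)
    (hψ : IsDiskAutomorphism ψ a₂ b₂ c₂ d₂) : DiffContOnCl ℂ (φ ∘ ψ) Disk :=
  DifferentiableOn.diffContOnCl fun _ hz =>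
    (hφ.differentiableAt_comp hψ (closure_ball_subset_closedBall hz)).differentiableWithinAt

theorem eqOn_disk_of_eqOn_sphere (hφ : IsDiskAutomorphism φ a b c d)
    (hψ : IsDiskAutomorphism ψ a₂ b₂ c₂ d₂) (h : EqOn (φ ∘ ψ) (ψ ∘ φ) (sphere 0 1)) :
    EqOn (φ ∘ ψ) (ψ ∘ φ) Disk :=
  Complex.eqOn_of_eqOn_frontier isBounded_ball (hφ.diffContOnCl_comp hψ)
    (hψ.diffContOnCl_comp hφ) (by rwa [frontier_ball 0 one_ne_zero])

end IsDiskAutomorphism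

end DiskAutomorphism

section Hardy

variable {S : DiskKernelSpace 1} {φ ψ : ℂ → ℂ} {a b c d a₂ b₂ c₂ d₂ p ζ v w : ℂ}
  {Cφ Cψ T : S.H →L[ℂ] S.H}

theorem hardy_inner_kernel_kernel (S : DiskKernelSpace 1) (hv : v ∈ Disk) (hw : w ∈ Disk) :
    ⟪S.kernel v, S.kernel w⟫ = (1 - v * conj w)⁻¹ := by
  rw [S.inner_kernel_kernel hv hw, Complex.ofReal_one, Complex.cpow_neg_one]

theorem hardy_comp_kernel_map (hφ : IsDiskAutomorphism φ a b c d)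
    (hCφ : S.IsCompositionOperator φ Cφ) (hp : p ∈ Disk) (hp0 : p ≠ 0) :
    Cφ (S.kernel (φ p)) = (conj (c * p + d) / ‖a * d - b * c‖ : ℂ) •
      ((c / conj p + d) • S.kernel p - (c / conj p) • S.kernel 0) := by
  -- At `w`, the left side is `conj (c * p + d) * (c * w + d) / (δ * (1 - w * conj p))` where
  -- `δ = ‖a * d - b * c‖`; expand `c * w` as `c / conj p * (1 - (1 - w * conj p))`.
  have h0 : (0 : ℂ) ∈ Disk := mem_ball_self one_pos
  refine S.ext_inner_kernel fun w hw => ?_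
  have hφw := hφ.mapsTo_disk hw
  have hφp := hφ.mapsTo_disk hp
  have hdw := hφ.denom_ne_zero w (ball_subset_closedBall hw)
  have hdp := hφ.denom_ne_zero p (ball_subset_closedBall hp)
  have hwp : 1 - w * conj p ≠ 0 :=
    one_sub_mul_conj_ne_zero (mem_ball_zero_iff.mp hw).le (mem_ball_zero_iff.mp hp)
  have hp0' : conj p ≠ 0 := (map_ne_zero _).mpr hp0
  rw [← ContinuousLinearMap.adjoint_inner_left, hCφ.adjoint_kernel hw hφw, inner_smul_right,
    inner_sub_right, inner_smul_right, inner_smul_right, hardy_inner_kernel_kernel S hφw hφp,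
    hardy_inner_kernel_kernel S hw hp, hardy_inner_kernel_kernel S hw h0,
    hφ.one_sub_map_mul_conj_map hdw hdp, inv_div, map_zero, mul_zero, sub_zero, inv_one]
  field_simp
  ring

theorem hardy_inner_comp_kernel_comp_kernel (hφ : IsDiskAutomorphism φ a b c d)
    (hψ : MapsTo ψ Disk Disk) (hCφ : S.IsCompositionOperator φ Cφ)
    (hCψ : S.IsCompositionOperator ψ Cψ) (hv : v ∈ Disk) (hp : p ∈ Disk) (hp0 : p ≠ 0) :
    ⟪Cψ (S.kernel v), Cφ (S.kernel (φ p))⟫ =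
      conj (c * p + d) / ‖a * d - b * c‖ *
        ((c / conj p + d) * (1 - v * conj (ψ p))⁻¹ -
          c / conj p * (1 - v * conj (ψ 0))⁻¹) := by
  have inner_comp : ∀ w ∈ Disk, ⟪Cψ (S.kernel v), S.kernel w⟫ = (1 - v * conj (ψ w))⁻¹ :=
    fun w hw => by
      rw [← ContinuousLinearMap.adjoint_inner_right, hCψ.adjoint_kernel hw (hψ hw),
        hardy_inner_kernel_kernel S hv (hψ hw)]
  rw [hardy_comp_kernel_map hφ hCφ hp hp0, inner_smul_right, inner_sub_right, inner_smul_right,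
    inner_smul_right, inner_comp p hp, inner_comp 0 (mem_ball_self one_pos)]

theorem one_sub_norm_sq_mul_hardy_inner_comp_kernel (hφ : IsDiskAutomorphism φ a b c d)
    (hψ : IsDiskAutomorphism ψ a₂ b₂ c₂ d₂) (hCφ : S.IsCompositionOperator φ Cφ)
    (hCψ : S.IsCompositionOperator ψ Cψ) (hp : p ∈ Disk) (hp0 : p ≠ 0) :
    ((1 - ‖p‖ ^ 2 : ℝ) : ℂ) * ⟪Cψ (S.kernel (ψ p)), Cφ (S.kernel (φ p))⟫ =
      conj (c * p + d) / ‖a * d - b * c‖ *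
        ((c / conj p + d) * (‖deriv ψ p‖ : ℂ)⁻¹ -
          c / conj p * (((1 - ‖p‖ ^ 2 : ℝ) : ℂ) * (1 - ψ p * conj (ψ 0))⁻¹)) := by
  have hψp := hψ.denom_ne_zero p (ball_subset_closedBall hp)
  have hpos : ((1 - ‖p‖ ^ 2 : ℝ) : ℂ) ≠ 0 := by
    exact_mod_cast (one_sub_norm_sq_pos (mem_ball_zero_iff.mp hp)).ne'
  rw [hardy_inner_comp_kernel_comp_kernel hφ hψ.mapsTo_disk hCφ hCψ (hψ.mapsTo_disk hp) hp hp0,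
    one_sub_mul_conj_self, hψ.one_sub_norm_map_sq hψp, Complex.ofReal_mul]
  field_simp

theorem tendsto_hardy_inner_comp_kernel (hφ : IsDiskAutomorphism φ a b c d)
    (hψ : IsDiskAutomorphism ψ a₂ b₂ c₂ d₂) (hCφ : S.IsCompositionOperator φ Cφ)
    (hCψ : S.IsCompositionOperator ψ Cψ) (hζ : ‖ζ‖ = 1) :
    Tendsto (fun p => ((1 - ‖p‖ ^ 2 : ℝ) : ℂ) *
        ⟪Cψ (S.kernel (ψ p)), Cφ (S.kernel (φ p))⟫) (𝓝[Disk] ζ)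
      (𝓝 ((‖deriv φ ζ‖ * ‖deriv ψ ζ‖ : ℝ) : ℂ)⁻¹) := by
  have hζ0 : ζ ≠ 0 := norm_ne_zero_iff.mp (hζ ▸ one_ne_zero)
  have hζ0' : conj ζ ≠ 0 := (map_ne_zero _).mpr hζ0
  have hφζ := hφ.denom_ne_zero ζ (by simp [hζ])
  have hψζ := hψ.denom_ne_zero ζ (by simp [hζ])
  have hψ0 : ψ 0 ∈ Disk := hψ.mapsTo_disk (mem_ball_self one_pos)
  have hpole : 1 - ψ ζ * conj (ψ 0) ≠ 0 :=
    one_sub_mul_conj_ne_zero (mem_sphere_zero_iff_norm.mp (hψ.mapsTo_sphere (by simp [hζ]))).le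
      (mem_ball_zero_iff.mp hψ0)
  have hcont : ContinuousAt (fun p => conj (c * p + d) / ‖a * d - b * c‖ *
      ((c / conj p + d) * (‖deriv ψ p‖ : ℂ)⁻¹ -
        c / conj p * (((1 - ‖p‖ ^ 2 : ℝ) : ℂ) * (1 - ψ p * conj (ψ 0))⁻¹))) ζ := by
    have hψ' : ContinuousAt (fun p => (‖deriv ψ p‖ : ℂ)) ζ :=
      Complex.continuous_ofReal.continuousAt.comp (hψ.continuousAt_norm_deriv hψζ)
    have hψc := (hψ.differentiableAt hψζ).continuousAt
    have hψ'ζ0 : (‖deriv ψ ζ‖ : ℂ) ≠ 0 := by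
      exact_mod_cast (hψ.norm_deriv_pos hψζ).ne'
    fun_prop (disch := assumption)
  have hvalue : conj (c * ζ + d) / ‖a * d - b * c‖ *
      ((c / conj ζ + d) * (‖deriv ψ ζ‖ : ℂ)⁻¹ -
        c / conj ζ * (((1 - ‖ζ‖ ^ 2 : ℝ) : ℂ) * (1 - ψ ζ * conj (ψ 0))⁻¹)) =
      ((‖deriv φ ζ‖ * ‖deriv ψ ζ‖ : ℝ) : ℂ)⁻¹ := by
    have hinv : c / conj ζ = c * ζ := by
      rw [← RCLike.inv_eq_conj hζ, div_inv_eq_mul]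
    rw [hinv, hζ, hφ.norm_deriv hφζ]
    push_cast
    rw [← Complex.conj_mul']
    simp only [map_add, map_mul, one_pow, sub_self, zero_mul, mul_zero, sub_zero, mul_inv_rev,
      inv_div]
    ring
  rw [← hvalue]
  refine (hcont.tendsto.mono_left nhdsWithin_le_nhds).congr' ?_
  filter_upwards [self_mem_nhdsWithin, nhdsWithin_le_nhds (isOpen_ne.mem_nhds hζ0)] with p hp hp0
  exact (one_sub_norm_sq_mul_hardy_inner_comp_kernel hφ hψ hCφ hCψ hp hp0).symm

theorem hardy_sqrt_mul_norm_kernel_map (S : DiskKernelSpace 1)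
    (hφ : IsDiskAutomorphism φ a b c d) (hp : p ∈ Disk) :
    √(1 - ‖p‖ ^ 2) * ‖S.kernel (φ p)‖ = (√‖deriv φ p‖)⁻¹ := by
  have hpos := one_sub_norm_sq_pos (mem_ball_zero_iff.mp hp)
  rw [← Real.sqrt_sq (norm_nonneg (S.kernel (φ p))), S.norm_kernel_sq (hφ.mapsTo_disk hp),
    Real.rpow_neg_one, ← Real.sqrt_mul hpos.le, ← Real.sqrt_inv,
    hφ.one_sub_norm_map_sq (hφ.denom_ne_zero p (ball_subset_closedBall hp)), mul_inv_rev,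
    mul_inv_cancel_left₀ hpos.ne']

theorem tendsto_hardy_inner_compact_kernel (hφ : IsDiskAutomorphism φ a b c d)
    (hψ : IsDiskAutomorphism ψ a₂ b₂ c₂ d₂) (hT : IsCompactOperator T) (hζ : ‖ζ‖ = 1) :
    Tendsto (fun p => ((1 - ‖p‖ ^ 2 : ℝ) : ℂ) * ⟪S.kernel (ψ p), T (S.kernel (φ p))⟫)
      (𝓝[Disk] ζ) (𝓝 0) := by
  have hφζ := hφ.denom_ne_zero ζ (by simp [hζ])
  have hψζ := hψ.denom_ne_zero ζ (by simp [hζ])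
  have hTe : Tendsto (fun p => ‖T (S.normalizedKernel (φ p))‖) (𝓝[Disk] ζ) (𝓝 0) := by
    simpa using ((S.tendsto_compact_normalizedKernel one_pos hT
      (mem_sphere_zero_iff_norm.mp (hφ.mapsTo_sphere (by simp [hζ])))).comp
        (hφ.tendsto_nhdsWithin_disk hφζ)).norm
  have hbound : ContinuousAt (fun p => (√‖deriv ψ p‖)⁻¹ * (√‖deriv φ p‖)⁻¹) ζ := by
    have hφ' := hφ.continuousAt_norm_deriv hφζ
    have hψ' := hψ.continuousAt_norm_deriv hψζ
    have hφ'ζ := (Real.sqrt_pos.mpr (hφ.norm_deriv_pos hφζ)).ne'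
    have hψ'ζ := (Real.sqrt_pos.mpr (hψ.norm_deriv_pos hψζ)).ne'
    exact (hψ'.sqrt.inv₀ hψ'ζ).mul (hφ'.sqrt.inv₀ hφ'ζ)
  have hlim := (hbound.tendsto.mono_left nhdsWithin_le_nhds).mul hTe
  rw [mul_zero] at hlim
  refine squeeze_zero_norm' ?_ hlim
  filter_upwards [self_mem_nhdsWithin] with p hp
  have hpos := one_sub_norm_sq_pos (mem_ball_zero_iff.mp hp)
  calc ‖((1 - ‖p‖ ^ 2 : ℝ) : ℂ) * ⟪S.kernel (ψ p), T (S.kernel (φ p))⟫‖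
      = (1 - ‖p‖ ^ 2) * ‖⟪S.kernel (ψ p), T (S.kernel (φ p))⟫‖ := by
        rw [norm_mul, Complex.norm_of_nonneg hpos.le]
    _ ≤ (1 - ‖p‖ ^ 2) * (‖S.kernel (ψ p)‖ * ‖T (S.kernel (φ p))‖) := by
        gcongr
        exact norm_inner_le_norm _ _
    _ = √(1 - ‖p‖ ^ 2) * ‖S.kernel (ψ p)‖ * (√(1 - ‖p‖ ^ 2) * ‖S.kernel (φ p)‖) *
          ‖T (S.normalizedKernel (φ p))‖ := by
        nth_rw 1 [← S.norm_smul_normalizedKernel (φ p), ← Real.mul_self_sqrt hpos.le]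
        rw [map_smul, norm_smul, Complex.norm_of_nonneg (norm_nonneg _)]
        ring
    _ = (√‖deriv ψ p‖)⁻¹ * (√‖deriv φ p‖)⁻¹ * ‖T (S.normalizedKernel (φ p))‖ := by
        rw [hardy_sqrt_mul_norm_kernel_map S hψ hp, hardy_sqrt_mul_norm_kernel_map S hφ hp]

theorem tendsto_hardy_inner_kernel_comp (hφ : IsDiskAutomorphism φ a b c d)
    (hψ : IsDiskAutomorphism ψ a₂ b₂ c₂ d₂) (hCφ : S.IsCompositionOperator φ Cφ)
    (hCψ : S.IsCompositionOperator ψ Cψ)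
    (hcpt : IsCompactOperator (⁅Cψ.adjoint, Cφ⁆ : S.H →L[ℂ] S.H))
    (hζ : ‖ζ‖ = 1) :
    Tendsto (fun p => ((1 - ‖p‖ ^ 2 : ℝ) : ℂ) * (1 - φ (ψ p) * conj (ψ (φ p)))⁻¹)
      (𝓝[Disk] ζ) (𝓝 ((‖deriv φ ζ‖ * ‖deriv ψ ζ‖ : ℝ) : ℂ)⁻¹) := by
  have hlim := (tendsto_hardy_inner_comp_kernel hφ hψ hCφ hCψ hζ).sub
    (tendsto_hardy_inner_compact_kernel hφ hψ hcpt hζ)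
  rw [sub_zero] at hlim
  refine hlim.congr' ?_
  filter_upwards [self_mem_nhdsWithin] with p hp
  have hφp := hφ.mapsTo_disk hp
  have hψp := hψ.mapsTo_disk hp
  rw [DiskKernelSpace.inner_kernel_commutator_kernel hCφ hCψ hψp (hφ.mapsTo_disk hψp) hφp
    (hψ.mapsTo_disk hφp), hardy_inner_kernel_kernel S (hφ.mapsTo_disk hψp) (hψ.mapsTo_disk hφp)]
  ring

theorem nhdsWithin_disk_neBot (hζ : ‖ζ‖ = 1) : (𝓝[Disk] ζ).NeBot :=
  mem_closure_iff_nhdsWithin_neBot.mp <| by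
    simp [closure_ball (0 : ℂ) one_ne_zero, hζ]

theorem eqOn_sphere_of_isCompactOperator_commutator (hφ : IsDiskAutomorphism φ a b c d)
    (hψ : IsDiskAutomorphism ψ a₂ b₂ c₂ d₂) (hCφ : S.IsCompositionOperator φ Cφ)
    (hCψ : S.IsCompositionOperator ψ Cψ)
    (hcpt : IsCompactOperator (⁅Cψ.adjoint, Cφ⁆ : S.H →L[ℂ] S.H)) :
    EqOn (φ ∘ ψ) (ψ ∘ φ) (sphere 0 1) := by
  intro ζ hζ
  have hζ1 := mem_sphere_zero_iff_norm.mp hζ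
  have hφζ := hφ.denom_ne_zero ζ (sphere_subset_closedBall hζ)
  have hψζ := hψ.denom_ne_zero ζ (sphere_subset_closedBall hζ)
  have := nhdsWithin_disk_neBot hζ1
  rw [Function.comp_apply, Function.comp_apply, ← one_sub_mul_conj_eq_zero_iff
    (mem_sphere_zero_iff_norm.mp (hψ.mapsTo_sphere (hφ.mapsTo_sphere hζ)))]
  by_contra hne
  have hcont : ContinuousAt
      (fun p => ((1 - ‖p‖ ^ 2 : ℝ) : ℂ) * (1 - φ (ψ p) * conj (ψ (φ p)))⁻¹) ζ := by
    have hweight : ContinuousAt (fun p : ℂ => ((1 - ‖p‖ ^ 2 : ℝ) : ℂ)) ζ :=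
      Complex.continuous_ofReal.continuousAt.comp (by fun_prop)
    have hφψ := (hφ.differentiableAt_comp hψ (sphere_subset_closedBall hζ)).continuousAt
    have hψφ := (hψ.differentiableAt_comp hφ (sphere_subset_closedBall hζ)).continuousAt
    exact hweight.mul ((continuousAt_const.sub
      (hφψ.mul (Complex.continuous_conj.continuousAt.comp hψφ))).inv₀ hne)
  have hlim := tendsto_nhds_unique (tendsto_hardy_inner_kernel_comp hφ hψ hCφ hCψ hcpt hζ1)
    (hcont.tendsto.mono_left nhdsWithin_le_nhds)
  have hφ' := (hφ.norm_deriv_pos hφζ).ne'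
  have hψ' := (hψ.norm_deriv_pos hψζ).ne'
  simp [hζ1, hφ', hψ'] at hlim

theorem norm_deriv_map_eq_of_isCompactOperator_commutator (hφ : IsDiskAutomorphism φ a b c d)
    (hψ : IsDiskAutomorphism ψ a₂ b₂ c₂ d₂) (hCφ : S.IsCompositionOperator φ Cφ)
    (hCψ : S.IsCompositionOperator ψ Cψ)
    (hcpt : IsCompactOperator (⁅Cψ.adjoint, Cφ⁆ : S.H →L[ℂ] S.H))
    (hζ : ‖ζ‖ = 1) : ‖deriv ψ (φ ζ)‖ = ‖deriv ψ ζ‖ := by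
  have hζ' : ζ ∈ sphere (0 : ℂ) 1 := mem_sphere_zero_iff_norm.mpr hζ
  have hφζ := hφ.denom_ne_zero ζ (sphere_subset_closedBall hζ')
  have hψφζ := hψ.denom_ne_zero _ (sphere_subset_closedBall (hφ.mapsTo_sphere hζ'))
  have hcomm := hφ.eqOn_disk_of_eqOn_sphere hψ
    (eqOn_sphere_of_isCompactOperator_commutator hφ hψ hCφ hCψ hcpt)
  have := nhdsWithin_disk_neBot hζ
  have hcont : ContinuousAt (fun p => ((‖deriv φ p‖ * ‖deriv ψ (φ p)‖ : ℝ) : ℂ)) ζ :=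
    Complex.continuous_ofReal.continuousAt.comp ((hφ.continuousAt_norm_deriv hφζ).mul
      ((hψ.continuousAt_norm_deriv hψφζ).comp (hφ.differentiableAt hφζ).continuousAt))
  have hφ' := (hφ.norm_deriv_pos hφζ).ne'
  have hψφ' := (hψ.norm_deriv_pos hψφζ).ne'
  have hlim : Tendsto (fun p => ((1 - ‖p‖ ^ 2 : ℝ) : ℂ) * (1 - φ (ψ p) * conj (ψ (φ p)))⁻¹)
      (𝓝[Disk] ζ) (𝓝 ((‖deriv φ ζ‖ * ‖deriv ψ (φ ζ)‖ : ℝ) : ℂ)⁻¹) := by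
    refine ((hcont.inv₀ (by simp [hφ', hψφ'])).tendsto.mono_left nhdsWithin_le_nhds).congr' ?_
    filter_upwards [self_mem_nhdsWithin] with p hp
    have hpos : ((1 - ‖p‖ ^ 2 : ℝ) : ℂ) ≠ 0 := by
      exact_mod_cast (one_sub_norm_sq_pos (mem_ball_zero_iff.mp hp)).ne'
    have hp' := ball_subset_closedBall hp
    rw [show φ (ψ p) = ψ (φ p) from hcomm hp, one_sub_mul_conj_self,
      hψ.one_sub_norm_map_sq (hψ.denom_ne_zero _ (hφ.mapsTo_closedBall hp')),
      hφ.one_sub_norm_map_sq (hφ.denom_ne_zero p hp')]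
    rw [Pi.inv_apply]
    push_cast at hpos ⊢
    field_simp
  have h := tendsto_nhds_unique hlim (tendsto_hardy_inner_kernel_comp hφ hψ hCφ hCψ hcpt hζ)
  exact mul_left_cancel₀ hφ' (Complex.ofReal_injective (inv_injective h))

end Hardy

/-- Let `φ, ψ` be automorphisms of the unit disk `D` (linear fractional
maps with inverses `φinv`, `ψinv`), neither the identity, and suppose the commutator
`[C_ψ*, C_φ]` is compact on `H²(D)`.  Then for every `ω ∈ ∂D`, with `ζ₁ = φ⁻¹(ω)` and
`ζ₂ = ψ⁻¹(ω)`, one has `φ⁻¹(ζ₂) = ψ⁻¹(ζ₁)` (hence `φ ∘ ψ = ψ ∘ φ`) and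
`|(ψ⁻¹)'(ζ₁)|·|ψ'(ζ₂)| = 1`. -/
theorem hardy_disk_commutator_compact_consequences
    (S : DiskKernelSpace 1)
    (a₁ b₁ c₁ d₁ a₂ b₂ c₂ d₂ : ℂ)
    (hdet₁ : a₁ * d₁ - b₁ * c₁ ≠ 0) (hdet₂ : a₂ * d₂ - b₂ * c₂ ≠ 0)
    (φ φinv ψ ψinv : ℂ → ℂ)
    (hφdef : ∀ z, φ z = (a₁ * z + b₁) / (c₁ * z + d₁))
    (hφinvdef : ∀ z, φinv z = (d₁ * z - b₁) / (-c₁ * z + a₁))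
    (hψdef : ∀ z, ψ z = (a₂ * z + b₂) / (c₂ * z + d₂))
    (hψinvdef : ∀ z, ψinv z = (d₂ * z - b₂) / (-c₂ * z + a₂))
    (hφden : ∀ z ∈ Metric.closedBall (0 : ℂ) 1, c₁ * z + d₁ ≠ 0 ∧ -c₁ * z + a₁ ≠ 0)
    (hψden : ∀ z ∈ Metric.closedBall (0 : ℂ) 1, c₂ * z + d₂ ≠ 0 ∧ -c₂ * z + a₂ ≠ 0)
    (hφbij : Set.BijOn φ Disk Disk) (hψbij : Set.BijOn ψ Disk Disk)
    (hφsph : Set.MapsTo φ (Metric.sphere (0 : ℂ) 1) (Metric.sphere (0 : ℂ) 1))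
    (hψsph : Set.MapsTo ψ (Metric.sphere (0 : ℂ) 1) (Metric.sphere (0 : ℂ) 1))
    (hφinv : ∀ z ∈ Metric.closedBall (0 : ℂ) 1, φinv (φ z) = z ∧ φ (φinv z) = z)
    (hψinv : ∀ z ∈ Metric.closedBall (0 : ℂ) 1, ψinv (ψ z) = z ∧ ψ (ψinv z) = z)
    (hφne : ¬ ∀ z ∈ Disk, φ z = z) (hψne : ¬ ∀ z ∈ Disk, ψ z = z)
    (Cφ Cψ : S.H →L[ℂ] S.H)
    (hCφ : S.IsCompositionOperator φ Cφ) (hCψ : S.IsCompositionOperator ψ Cψ)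
    (hcpt : IsCompactOperator
      ⇑((ContinuousLinearMap.adjoint Cψ).comp Cφ -
        Cφ.comp (ContinuousLinearMap.adjoint Cψ))) :
    (∀ ω : ℂ, ‖ω‖ = 1 →
      φinv (ψinv ω) = ψinv (φinv ω) ∧
      ‖deriv ψinv (φinv ω)‖ * ‖deriv ψ (ψinv ω)‖ = 1) ∧
    ∀ z ∈ Disk, φ (ψ z) = ψ (φ z) := by
  have hφ : IsDiskAutomorphism φ a₁ b₁ c₁ d₁ :=
    ⟨hφdef, fun z hz => (hφden z hz).1, hφbij.mapsTo, hφsph⟩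
  have hψ : IsDiskAutomorphism ψ a₂ b₂ c₂ d₂ :=
    ⟨hψdef, fun z hz => (hψden z hz).1, hψbij.mapsTo, hψsph⟩
  have hcomm := eqOn_sphere_of_isCompactOperator_commutator hφ hψ hCφ hCψ hcpt
  refine ⟨fun ω hω => ?_, hφ.eqOn_disk_of_eqOn_sphere hψ hcomm⟩
  obtain ⟨η, hη, rfl⟩ := hψ.surjOn_sphere_of_rightInvOn
    (fun z hz => (hψinv z (sphere_subset_closedBall hz)).2) (mem_sphere_zero_iff_norm.mpr hω)
  obtain ⟨ζ, hζ, rfl⟩ := hφ.surjOn_sphere_of_rightInvOn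
    (fun z hz => (hφinv z (sphere_subset_closedBall hz)).2) hη
  have hψζ := sphere_subset_closedBall (hψsph hζ)
  have hφinv_ω : φinv (ψ (φ ζ)) = ψ ζ := by
    rw [← show φ (ψ ζ) = ψ (φ ζ) from hcomm hζ, (hφinv _ hψζ).1]
  have hψinv_ω : ψinv (ψ (φ ζ)) = φ ζ := (hψinv _ (sphere_subset_closedBall hη)).1
  have hζ' := sphere_subset_closedBall hζ
  have hψinv_diff : DifferentiableAt ℂ ψinv (ψ ζ) := funext hψinvdef ▸
    (hasDerivAt_linearFractional d₂ (-b₂) (hψden _ hψζ).2).differentiableAt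
  rw [hφinv_ω, hψinv_ω, (hφinv ζ hζ').1, (hψinv ζ hζ').1]
  refine ⟨rfl, ?_⟩
  rw [norm_deriv_map_eq_of_isCompactOperator_commutator hφ hψ hCφ hCψ hcpt
    (mem_sphere_zero_iff_norm.mp hζ), ← norm_mul,
    hψ.deriv_leftInv_mul_deriv (fun z hz => (hψinv z hz).1) hζ' hψinv_diff, norm_one]
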